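/- For each dimension n there is a constant ε_n > 0 such that the following holds: if g is any Riemannian metric on real projective space RP^n and R < (1/2)·Sys(RP^n, g), then there is a point p ∈ RP^n such that the metric ball of radius R around p has Riemannian volume at least ε_n · R^n. -/

import Mathlib

/-!
Formalization of a statement from L. Guth, "Systolic inequalities and minimal hypersurfaces"
(arXiv:0903.5299).

Since Mathlib does not have Riemannian metrics, a Riemannian metric `g` on a closed manifold
is encoded by its geodesic distance function: a (length/intrinsic) metric space structure.
Lengths of curves are computed from the distance as the total variation, which for the geodesic
distance of a Riemannian metric agrees with the Riemannian length.  The `d`-dimensional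
Riemannian volume is encoded as the `d`-dimensional Hausdorff measure (with the normalization
constant `ω_d/2^d` making it agree with the Riemannian volume on `d`-dimensional Riemannian
submanifolds).
-/

open MeasureTheory Metric Set
open scoped ENNReal

noncomputable section

/-- The length (total variation, i.e. arclength) of a path in an (extended) metric space.
For a path in a Riemannian manifold, computing it with respect to the geodesic distance
gives the Riemannian length of the path. -/
def pathLength {X : Type} [PseudoEMetricSpace X] {x y : X} (γ : Path x y) : ℝ≥0∞ :=
  eVariationOn (fun t => γ t) Set.univ

/-- A metric is a length (intrinsic) metric: the distance between two points is the infimum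
of the lengths of paths joining them.  The geodesic distance of a Riemannian metric is a
length metric. -/
def IsLengthMetric (X : Type) [PseudoEMetricSpace X] : Prop :=
  ∀ x y : X, edist x y = ⨅ γ : Path x y, pathLength γ

/-- The systole of a space: the infimum of the lengths of all non-contractible closed curves. -/
def systole (X : Type) [PseudoEMetricSpace X] : ℝ≥0∞ :=
  ⨅ (x : X) (γ : Path x x) (_ : ¬γ.Homotopic (Path.refl x)), pathLength γ

/-- The volume `ω_d = π^(d/2)/Γ(d/2+1)` of the Euclidean unit ball in dimension `d`. -/
def unitBallVolume (d : ℕ) : ℝ≥0∞ :=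
  ENNReal.ofReal (Real.pi ^ ((d : ℝ) / 2) / Real.Gamma ((d : ℝ) / 2 + 1))

/-- The `d`-dimensional Riemannian volume of a subset of a metric space: the `d`-dimensional
Hausdorff measure, normalized (à la Federer, by `ω_d/2^d`) so that it agrees with the
Riemannian volume on `d`-dimensional Riemannian manifolds and their `d`-dimensional
submanifolds. -/
def rvol (d : ℕ) {X : Type} [EMetricSpace X] [MeasurableSpace X] [BorelSpace X]
    (s : Set X) : ℝ≥0∞ :=
  (unitBallVolume d / 2 ^ d) * μH[(d : ℝ)] s

/-- The antipodal identification on the unit sphere in `ℝⁿ⁺¹`. -/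
def antipodalSetoid (n : ℕ) :
    Setoid (Metric.sphere (0 : EuclideanSpace ℝ (Fin (n + 1))) 1) where
  r x y := (x : EuclideanSpace ℝ (Fin (n + 1))) = y ∨
    (x : EuclideanSpace ℝ (Fin (n + 1))) = -(y : EuclideanSpace ℝ (Fin (n + 1)))
  iseqv := by
    constructor
    · intro x; exact Or.inl rfl
    · rintro x y (h | h)
      · exact Or.inl h.symm
      · right; rw [h, neg_neg]
    · rintro x y z (h1 | h1) (h2 | h2)
      · exact Or.inl (h1.trans h2)
      · exact Or.inr (h1.trans h2)
      · right; rw [h1, h2]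
      · left; rw [h1, h2, neg_neg]

/-- The standard topological real projective `n`-space, as the quotient of the unit sphere
in `ℝⁿ⁺¹` by the antipodal identification. -/
abbrev RealProjectiveSpace (n : ℕ) : Type := Quotient (antipodalSetoid n)


namespace LSchain

variable {V : Type} 

/-- mod 2 chains on lists -/
abbrev Ch (V : Type) := List V →₀ ZMod 2

def cone (b : V) : Ch V →ₗ[ZMod 2] Ch V := Finsupp.lmapDomain _ _ (List.cons b)

def bdL : List V → Ch V
  | [] => 0
  | a :: l => Finsupp.single l 1 + cone a (bdL l)

def lin {N : Type} [AddCommGroup N] [Module (ZMod 2) N] (f : List V → N) : Ch V →ₗ[ZMod 2] N :=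
  Finsupp.linearCombination (ZMod 2) f

lemma lin_single {N : Type} [AddCommGroup N] [Module (ZMod 2) N] (f : List V → N) (l : List V) :
    lin f (Finsupp.single l 1) = f l := by simp [lin]

def bd : Ch V →ₗ[ZMod 2] Ch V := lin bdL

lemma cone_single (b : V) (l : List V) :
    cone b (Finsupp.single l 1) = Finsupp.single (b :: l) 1 := by simp [cone]

lemma bd_single (l : List V) : bd (Finsupp.single l 1) = bdL l := lin_single _ _

lemma hom_ext {N : Type} [AddCommGroup N] [Module (ZMod 2) N] {f g : Ch V →ₗ[ZMod 2] N}
    (h : ∀ l, f (Finsupp.single l 1) = g (Finsupp.single l 1)) : f = g := by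
  refine Finsupp.lhom_ext' fun l => LinearMap.ext_ring ?_
  simpa using h l

lemma ch_add_self (x : Ch V) : x + x = 0 := by
  ext l; simp [CharTwo.add_self_eq_zero]

lemma bd_cone (b : V) (c : Ch V) : bd (cone b c) = c + cone b (bd c) := by
  have : bd ∘ₗ cone b = LinearMap.id + cone b ∘ₗ bd := by
    refine hom_ext fun l => ?_
    simp [cone_single, bd_single, bdL]
  exact LinearMap.congr_fun this c

lemma bd_bd (c : Ch V) : bd (bd c) = 0 := by
  have : (bd ∘ₗ bd : Ch V →ₗ[ZMod 2] Ch V) = 0 := by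
    refine hom_ext fun l => ?_
    simp only [LinearMap.comp_apply, bd_single, LinearMap.zero_apply]
    induction l with
    | nil => simp [bdL]
    | cons a l ih =>
      simp only [bdL, map_add, bd_single, bd_cone, ih, map_zero, add_zero]
      exact ch_add_self _
  exact LinearMap.congr_fun this c

/-- chains supported on lists satisfying `Q` -/
def Sp (Q : List V → Prop) : Submodule (ZMod 2) (Ch V) := Finsupp.supported _ _ {l | Q l}

lemma single_mem {Q : List V → Prop} {l : List V} (h : Q l) :
    (Finsupp.single l 1 : Ch V) ∈ Sp Q := Finsupp.single_mem_supported _ _ h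

lemma map_mem {Q : List V → Prop} {N : Type} [AddCommGroup N] [Module (ZMod 2) N]
    {P : Submodule (ZMod 2) N} {T : Ch V →ₗ[ZMod 2] N}
    (h : ∀ l, Q l → T (Finsupp.single l 1) ∈ P) {c : Ch V} (hc : c ∈ Sp Q) : T c ∈ P := by
  have : Sp Q ≤ P.comap T := by
    rw [Sp, Finsupp.supported_eq_span_single, Submodule.span_le]
    rintro _ ⟨l, hl, rfl⟩
    exact h l hl
  exact this hc

lemma eq_of_mem {Q : List V → Prop} {N : Type} [AddCommGroup N] [Module (ZMod 2) N]
    {T S : Ch V →ₗ[ZMod 2] N}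
    (h : ∀ l, Q l → T (Finsupp.single l 1) = S (Finsupp.single l 1)) {c : Ch V} (hc : c ∈ Sp Q) :
    T c = S c := by
  have := map_mem (P := ⊥) (T := T - S) (fun l hl => by simp [h l hl]) hc
  simpa [sub_eq_zero] using this

lemma Sp_mono {Q Q' : List V → Prop} (h : ∀ l, Q l → Q' l) : Sp Q ≤ Sp Q' :=
  Finsupp.supported_mono h

lemma cone_mem {Q Q' : List V → Prop} {b : V} (h : ∀ l, Q l → Q' (b :: l)) {c : Ch V}
    (hc : c ∈ Sp Q) : cone b c ∈ Sp Q' :=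
  map_mem (fun l hl => by rw [cone_single]; exact single_mem (h l hl)) hc

/-- boundary: faces are lists one shorter with elements among the original -/
lemma bdL_mem (l : List V) : bdL l ∈ Sp (fun l' => l'.length + 1 = l.length ∧ ∀ v ∈ l', v ∈ l) := by
  induction l with
  | nil => simp [bdL]
  | cons a l ih =>
    rw [bdL]
    refine Submodule.add_mem _ (single_mem ⟨by simp, fun v hv => by simp [hv]⟩)
      (cone_mem ?_ ih)
    rintro l' ⟨h1, h2⟩
    refine ⟨by simp [h1], fun v hv => ?_⟩
    rcases List.mem_cons.1 hv with rfl | hv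
    · simp
    · simp [h2 v hv]

/-! ### cochains -/

def gg (s : ℕ → V → ZMod 2) : ℕ → List V → ZMod 2
  | 0, _ => 1
  | k + 1, a :: b :: l => (s k a + s k b) * gg s k (b :: l)
  | _ + 1, _ => 0

def bb (s : ℕ → V → ZMod 2) (k : ℕ) : List V → ZMod 2
  | [] => 0
  | a :: l => s k a * gg s k (a :: l)

lemma bb_of_gg (s : ℕ → V → ZMod 2) (k : ℕ)
    (hA : ∀ l : List V, l.length = k + 2 → lin (gg s k) (bdL l) = 0)
    (l : List V) (hl : l.length = k + 2) : lin (bb s k) (bdL l) = gg s (k + 1) l := by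
  match l, hl with
  | a :: b :: t, hl =>
    have h := hA _ hl
    have key : ∀ c : Ch V, lin (bb s k) (cone a c) = s k a * lin (gg s k) (cone a c) := by
      intro c
      have : lin (bb s k) ∘ₗ cone a = s k a • (lin (gg s k) ∘ₗ cone a) := by
        refine hom_ext fun l => ?_
        simp [cone_single, lin_single, bb]
      simpa using LinearMap.congr_fun this c
    rw [bdL, map_add, lin_single] at h ⊢
    rw [key, gg]
    have h2 : lin (gg s k) (cone a (bdL (b :: t))) = gg s k (b :: t) := by
      rw [← sub_eq_zero, CharTwo.sub_eq_add, add_comm]; exact h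
    rw [h2, bb]; ring

lemma gg_bd (s : ℕ → V → ZMod 2) (k : ℕ) :
    ∀ l : List V, l.length = k + 2 → lin (gg s k) (bdL l) = 0 := by
  induction k with
  | zero =>
    intro l hl
    match l, hl with
    | [a, b], _ => 
      simp [bdL, cone_single, lin_single, gg]; decide
  | succ k ih =>
    intro l hl
    have h1 : lin (gg s (k+1)) (bdL l) = lin (bb s k) (bd (bdL l)) := by
      have : bdL l ∈ Sp (fun l' : List V => l'.length = k + 2) :=
        Sp_mono (fun l' h => by have := h.1; omega) (bdL_mem l)
      refine eq_of_mem (S := lin (bb s k) ∘ₗ bd) (fun l' hl' => ?_) this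
      simp only [LinearMap.comp_apply, bd_single, lin_single]
      exact (bb_of_gg s k ih l' hl').symm
    rw [h1, ← bd_single, bd_bd, map_zero]

lemma bb_bd (s : ℕ → V → ZMod 2) (k : ℕ) {c : Ch V}
    (hc : c ∈ Sp (fun l : List V => l.length = k + 2)) :
    lin (bb s k) (bd c) = lin (gg s (k + 1)) c := by
  refine eq_of_mem (T := lin (bb s k) ∘ₗ bd) (fun l hl => ?_) hc
  simp only [LinearMap.comp_apply, bd_single, lin_single]
  exact bb_of_gg s k (gg_bd s k) l hl

lemma gg_zero (s : ℕ → V → ZMod 2) (j : ℕ) (c : ZMod 2) (k : ℕ) (hj : j < k) (l : List V)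
    (h : ∀ v ∈ l, s j v = c) : gg s k l = 0 := by
  induction k generalizing l with
  | zero => omega
  | succ k ih =>
    match l with
    | [] => rfl
    | [a] => rfl
    | a :: b :: t =>
      rw [gg]
      by_cases hjk : j = k
      · subst hjk
        rw [h a (by simp), h b (by simp), CharTwo.add_self_eq_zero, zero_mul]
      · rw [ih (by omega) (b :: t) (fun v hv => h v (List.mem_cons_of_mem _ hv)), mul_zero]

def nu [Neg V] : Ch V →ₗ[ZMod 2] Ch V := Finsupp.lmapDomain _ _ (List.map (fun v => -v))

lemma nu_single [Neg V] (l : List V) :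
    nu (Finsupp.single l 1) = Finsupp.single (l.map (fun v => -v)) (1 : ZMod 2) := by simp [nu]

lemma gg_neg [Neg V] (s : ℕ → V → ZMod 2) (X : Set V)
    (hs : ∀ j, ∀ x ∈ X, s j (-x) = s j x + 1) (k : ℕ) (l : List V) (hl : ∀ v ∈ l, v ∈ X) :
    gg s k (l.map (fun v => -v)) = gg s k l := by
  induction k generalizing l with
  | zero => rfl
  | succ k ih =>
    match l with
    | [] => rfl
    | [a] => rfl
    | a :: b :: t =>
      have := ih (b :: t) (fun v hv => hl v (List.mem_cons_of_mem _ hv))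
      simp only [List.map_cons] at this ⊢
      rw [gg, gg, this, hs k a (hl a (by simp)), hs k b (hl b (by simp))]
      have : (1 : ZMod 2) + 1 = 0 := by decide
      linear_combination (gg s k (b :: t)) * this

/-- Main algebraic statement. -/
lemma chain_main [Neg V] (s : ℕ → V → ZMod 2) (X : Set V)
    (hs : ∀ j, ∀ x ∈ X, s j (-x) = s j x + 1) (c : ℕ → Ch V) (n : ℕ)
    (h0 : ∃ v, c 0 = Finsupp.single [v] 1)
    (hc : ∀ k ≤ n, c k ∈ Sp (fun l => l.length = k + 1 ∧ ∀ v ∈ l, v ∈ X))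
    (hbd : ∀ k < n, bd (c (k + 1)) = c k + nu (c k)) :
    ∀ k ≤ n, lin (gg s k) (c k) = 1 := by
  intro k
  induction k with
  | zero => intro _; obtain ⟨v, hv⟩ := h0; rw [hv, lin_single]; rfl
  | succ k ih =>
    intro hk
    rw [← bb_bd s k (Sp_mono (fun l h => h.1) (hc _ hk)), hbd k (by omega), map_add,
      ← ih (by omega)]
    have : (lin (bb s k) + lin (bb s k) ∘ₗ nu) (c k) = lin (gg s k) (c k) := by
      refine eq_of_mem (fun l hl => ?_) (hc k (by omega))
      simp only [LinearMap.add_apply, LinearMap.comp_apply, nu_single, lin_single]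
      match l, hl with
      | a :: t, hl =>
        have h1 := gg_neg s X hs k (a :: t) hl.2
        simp only [List.map_cons] at h1 ⊢
        rw [bb, bb, h1, hs k a (hl.2 a (by simp))]
        have h2 : (1 : ZMod 2) + 1 = 0 := by decide
        linear_combination (s k a * gg s k (a :: t)) * h2
    simpa using this

/-! ### subdivision -/

variable {E : Type} [NormedAddCommGroup E] [NormedSpace ℝ E]

def bary (l : List E) : E := (l.length : ℝ)⁻¹ • l.sum

def Sd : ℕ → (Ch E →ₗ[ZMod 2] Ch E)
  | 0 => LinearMap.id
  | k + 1 => lin (fun l => cone (bary l) (Sd k (bdL l)))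

lemma Sd_succ_single (k : ℕ) (l : List E) :
    Sd (k + 1) (Finsupp.single l 1) = cone (bary l) (Sd k (bdL l)) := lin_single _ _

lemma bd_Sd (k : ℕ) : ∀ c : Ch E, bd (Sd (k + 1) c) = Sd k (bd c) := by
  induction k with
  | zero =>
    intro c
    have : (bd ∘ₗ Sd 1 : Ch E →ₗ[ZMod 2] Ch E) = Sd 0 ∘ₗ bd := by
      refine hom_ext fun l => ?_
      simp only [LinearMap.comp_apply, Sd_succ_single, bd_cone, bd_single]
      simp only [Sd, LinearMap.id_apply]
      rw [← bd_single, bd_bd]; simp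
    exact LinearMap.congr_fun this c
  | succ k ih =>
    intro c
    have : (bd ∘ₗ Sd (k + 2) : Ch E →ₗ[ZMod 2] Ch E) = Sd (k + 1) ∘ₗ bd := by
      refine hom_ext fun l => ?_
      simp only [LinearMap.comp_apply, Sd_succ_single, bd_cone, bd_single, ih]
      rw [← bd_single, bd_bd]; simp
    exact LinearMap.congr_fun this c

lemma nu_cone (b : E) (c : Ch E) : nu (cone b c) = cone (-b) (nu c) := by
  have : (nu ∘ₗ cone b : Ch E →ₗ[ZMod 2] Ch E) = cone (-b) ∘ₗ nu := by
    refine hom_ext fun l => ?_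
    simp [nu_single, cone_single]
  exact LinearMap.congr_fun this c

lemma nu_nu (c : Ch E) : nu (nu c) = c := by
  have : (nu ∘ₗ nu : Ch E →ₗ[ZMod 2] Ch E) = LinearMap.id := by
    refine hom_ext fun l => ?_
    simp [nu_single]
  exact LinearMap.congr_fun this c

lemma nu_bd (c : Ch E) : nu (bd c) = bd (nu c) := by
  have : (nu ∘ₗ bd : Ch E →ₗ[ZMod 2] Ch E) = bd ∘ₗ nu := by
    refine hom_ext fun l => ?_
    simp only [LinearMap.comp_apply, nu_single, bd_single]
    induction l with
    | nil => simp [bdL]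
    | cons a l ih => simp [bdL, nu_single, nu_cone, ih]
  exact LinearMap.congr_fun this c

lemma bary_neg (l : List E) : bary (l.map (fun v => -v)) = - bary l := by
  have : (l.map (fun v => -v)).sum = - l.sum := by
    induction l with
    | nil => simp
    | cons a l ih => simp [ih]; abel
  simp [bary, this]

lemma nu_Sd (k : ℕ) : ∀ c : Ch E, nu (Sd k c) = Sd k (nu c) := by
  induction k with
  | zero => intro c; rfl
  | succ k ih =>
    intro c
    have : (nu ∘ₗ Sd (k + 1) : Ch E →ₗ[ZMod 2] Ch E) = Sd (k + 1) ∘ₗ nu := by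
      refine hom_ext fun l => ?_
      simp only [LinearMap.comp_apply, nu_single, Sd_succ_single, nu_cone, ih, bary_neg]
      rw [← bd_single, nu_bd, nu_single, bd_single]
    exact LinearMap.congr_fun this c

lemma norm_sum_sub (l : List E) (v : E) (D : ℝ) (h : ∀ w ∈ l, dist w v ≤ D) :
    ‖l.sum - (l.length : ℝ) • v‖ ≤ l.length * D := by
  induction l with
  | nil => simp
  | cons a l ih =>
    have h1 := ih (fun w hw => h w (List.mem_cons_of_mem _ hw))
    have h2 := h a (by simp)
    rw [dist_eq_norm] at h2
    have : (a :: l).sum - ((a :: l).length : ℝ) • v = (a - v) + (l.sum - (l.length : ℝ) • v) := by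
      simp [add_smul]; abel
    rw [this]
    refine (norm_add_le _ _).trans ?_
    simp only [List.length_cons]; push_cast; linarith

lemma dist_bary (l : List E) (v : E) (hv : v ∈ l) (D : ℝ) (h : ∀ w ∈ l, ∀ u ∈ l, dist w u ≤ D)
    (k : ℕ) (hl : l.length = k + 1) : dist v (bary l) ≤ (k / (k + 1) : ℝ) * D := by
  classical
  have hp := List.perm_cons_erase hv
  have hsum : l.sum = v + (l.erase v).sum := by rw [hp.sum_eq]; simp
  have hlen : (l.erase v).length = k := by rw [List.length_erase_of_mem hv]; omega
  have h1 := norm_sum_sub (l.erase v) v D (fun w hw => h w (List.mem_of_mem_erase hw) v hv)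
  rw [hlen] at h1
  have hk : (0:ℝ) < k + 1 := by positivity
  have : bary l - v = ((k:ℝ) + 1)⁻¹ • ((l.erase v).sum - (k:ℝ) • v) := by
    rw [bary, hl, hsum]; push_cast
    match_scalars <;> field_simp <;> ring
  rw [dist_comm, dist_eq_norm, this, norm_smul, Real.norm_of_nonneg (by positivity), div_mul_eq_mul_div,
    inv_mul_eq_div]
  gcongr

lemma bary_mem (l : List E) (hl : l ≠ []) (F : Set E) (hF : Convex ℝ F) (h : ∀ v ∈ l, v ∈ F) :
    bary l ∈ F := by
  have hpos : 0 < l.length := List.length_pos_iff.2 hl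
  have : bary l = ∑ i : Fin l.length, (l.length : ℝ)⁻¹ • l.get i := by
    rw [← Finset.smul_sum, bary]; congr 1
    simp
  rw [this]
  refine hF.sum_mem (fun _ _ => by positivity) ?_ (fun i _ => h _ (List.get_mem _ _))
  simp; field_simp

def Fine (k : ℕ) (F : Set E) (D : ℝ) (l : List E) : Prop :=
  l.length = k ∧ (∀ v ∈ l, v ∈ F) ∧ ∀ v ∈ l, ∀ w ∈ l, dist v w ≤ D

lemma Sp_inter {Q Q' : List E → Prop} {c : Ch E} (h : c ∈ Sp Q) (h' : c ∈ Sp Q') :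
    c ∈ Sp (fun l => Q l ∧ Q' l) := by
  rw [Sp, Finsupp.mem_supported] at *
  exact fun l hl => ⟨h hl, h' hl⟩

lemma Sd_fine (n : ℕ) (k : ℕ) (hk : k ≤ n + 1) : ∀ (F : Set E) (_ : Convex ℝ F) (D : ℝ) (_ : 0 ≤ D)
    (l : List E), Fine k F D l →
    Sd k (Finsupp.single l 1) ∈ Sp (Fine k F ((n / (n + 1) : ℝ) * D)) := by
  induction k with
  | zero =>
    intro F hF D hD l hl
    refine single_mem (Q := Fine 0 F _) ⟨hl.1, hl.2.1, ?_⟩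
    have := List.length_eq_zero_iff.1 hl.1
    subst this; simp
  | succ k ih =>
    intro F hF D hD l hl
    rw [Sd_succ_single]
    have hθ : (k / (k + 1) : ℝ) ≤ n / (n + 1) := by
      rw [div_le_div_iff₀ (by positivity) (by positivity)]
      have : (k : ℝ) ≤ n := by exact_mod_cast (by omega : k ≤ n)
      nlinarith
    set θ := (n / (n + 1) : ℝ) with hθd
    have hb : bary l ∈ F := bary_mem l (by rintro rfl; simp [Fine] at hl) F hF hl.2.1
    have hball : ∀ v ∈ l, v ∈ closedBall (bary l) (θ * D) := fun v hv =>
      (dist_bary l v hv D hl.2.2 k hl.1).trans (by gcongr)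
    have gen : ∀ (F : Set E), Convex ℝ F → (∀ v ∈ l, v ∈ F) → Sd k (bdL l) ∈ Sp (Fine k F (θ * D)) := by
      intro F hF hlF
      refine map_mem (fun l' hl' => ih (by omega) F hF D hD l' ?_) (bdL_mem l)
      exact ⟨by have := hl.1; omega, fun v hv => hlF v (hl'.2 v hv),
        fun v hv w hw => hl.2.2 v (hl'.2 v hv) w (hl'.2 w hw)⟩
    refine cone_mem ?_ (Sp_inter (gen F hF hl.2.1) (gen _ (convex_closedBall _ _) hball))
    rintro l' ⟨h1, h2⟩
    refine ⟨by simp [h1.1], ?_, ?_⟩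
    · intro v hv
      rcases List.mem_cons.1 hv with rfl | hv
      · exact hb
      · exact h1.2.1 v hv
    · intro v hv w hw
      rcases List.mem_cons.1 hv with rfl | hv <;> rcases List.mem_cons.1 hw with rfl | hw
      · rw [dist_self]; positivity
      · rw [dist_comm]; exact h2.2.1 w hw
      · exact h2.2.1 v hv
      · exact h1.2.2 v hv w hw

lemma Sd_iter_fine (n k : ℕ) (hk : k ≤ n + 1) (𝓕 : Set (Set E)) (h𝓕 : ∀ F ∈ 𝓕, Convex ℝ F)
    (D : ℝ) (hD : 0 ≤ D) (c : Ch E) (hc : c ∈ Sp (fun l => ∃ F ∈ 𝓕, Fine k F D l)) (m : ℕ) :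
    ((Sd k)^[m]) c ∈ Sp (fun l => ∃ F ∈ 𝓕, Fine k F ((n / (n + 1) : ℝ) ^ m * D) l) := by
  induction m with
  | zero => simpa using hc
  | succ m ih =>
    rw [Function.iterate_succ_apply']
    refine map_mem ?_ ih
    rintro l ⟨F, hF, hl⟩
    have := Sd_fine n k hk F (h𝓕 F hF) _ (by positivity) l hl
    rw [← mul_assoc, ← pow_succ'] at this
    exact Sp_mono (fun l h => ⟨F, hF, h⟩) this

/-- the hemisphere chains -/
def hemi (e : ℕ → E) : ℕ → Ch E
  | 0 => Finsupp.single [e 0] 1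
  | k + 1 => cone (e (k + 1)) (hemi e k + nu (hemi e k))

lemma bd_hemi (e : ℕ → E) (k : ℕ) : bd (hemi e (k + 1)) = hemi e k + nu (hemi e k) := by
  have : bd (hemi e k + nu (hemi e k)) = 0 := by
    cases k with
    | zero => simp [hemi, nu_single, bd_single, bdL, ch_add_self]
    | succ k =>
      rw [map_add, ← nu_bd, bd_hemi e k, map_add, nu_nu, add_comm (nu _)]
      exact ch_add_self _
  rw [hemi, bd_cone, this, map_zero, add_zero]

lemma hemi_mem (e : ℕ → E) (k : ℕ) :
    hemi e k ∈ Sp (fun l => l.length = k + 1 ∧ ∃ s : ℕ → ℝ, (∀ i, s i = 1 ∨ s i = -1) ∧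
      ∀ v ∈ l, ∃ i ≤ k, v = s i • e i) := by
  induction k with
  | zero =>
    refine single_mem ⟨rfl, fun _ => 1, by simp, ?_⟩
    intro v hv
    exact ⟨0, le_rfl, by simpa using hv⟩
  | succ k ih =>
    refine cone_mem ?_ (Submodule.add_mem _ ih (map_mem (T := nu) ?_ ih))
    · rintro l ⟨h1, s, hs, h2⟩
      refine ⟨by simp [h1], fun i => if i ≤ k then s i else 1, ?_, ?_⟩
      · intro i; dsimp only; split_ifs; exacts [hs i, Or.inl rfl]
      · intro v hv
        rcases List.mem_cons.1 hv with rfl | hv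
        · exact ⟨k + 1, le_rfl, by simp⟩
        · obtain ⟨i, hi, rfl⟩ := h2 v hv
          exact ⟨i, by omega, by simp [hi]⟩
    · rintro l ⟨h1, s, hs, h2⟩
      rw [nu_single]
      refine single_mem ⟨by simp [h1], fun i => - s i, ?_, ?_⟩
      · intro i; rcases hs i with h | h <;> simp [h]
      · intro v hv
        obtain ⟨w, hw, rfl⟩ := List.mem_map.1 hv
        obtain ⟨i, hi, rfl⟩ := h2 w hw
        exact ⟨i, hi, by simp⟩

lemma Sd_one_iter (v : E) (m : ℕ) :
    (Sd 1)^[m] (Finsupp.single [v] 1) = Finsupp.single [v] 1 := by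
  induction m with
  | zero => rfl
  | succ m ih =>
    rw [Function.iterate_succ_apply', ih, Sd_succ_single]
    simp [bdL, Sd, bary, cone_single]

abbrev Eu (n : ℕ) := EuclideanSpace ℝ (Fin (n + 1))

/-- The octahedral sphere. -/
def Octa (n : ℕ) : Set (Eu n) := {x | ∑ i, |x i| = 1}

theorem LS_lists (n : ℕ) (s : ℕ → Eu n → ZMod 2)
    (hs : ∀ j, ∀ x ∈ Octa n, s j (-x) = s j x + 1) (δ : ℝ) (hδ : 0 < δ) :
    ∃ l : List (Eu n), l ≠ [] ∧ (∀ v ∈ l, v ∈ Octa n) ∧ (∀ v ∈ l, ∀ w ∈ l, dist v w ≤ δ) ∧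
      ∀ j < n, ¬ ∃ c, ∀ v ∈ l, s j v = c := by
  let e : ℕ → Eu n := fun k => if h : k < n + 1 then EuclideanSpace.single ⟨k, h⟩ 1 else 0
  let face : (ℕ → ℝ) → Set (Eu n) := fun σ => {x | (∀ i : Fin (n+1), 0 ≤ σ i * x i) ∧
    ∑ i : Fin (n+1), σ i * x i = 1}
  let 𝓕 : Set (Set (Eu n)) := {F | ∃ σ : ℕ → ℝ, (∀ i, σ i = 1 ∨ σ i = -1) ∧ F = face σ}
  have hconv : ∀ F ∈ 𝓕, Convex ℝ F := by
    rintro _ ⟨σ, hσ, rfl⟩ x hx y hy a b ha hb hab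
    refine ⟨fun i => ?_, ?_⟩
    · have h1 := mul_nonneg ha (hx.1 i)
      have h2 := mul_nonneg hb (hy.1 i)
      simp only [PiLp.add_apply, PiLp.smul_apply, smul_eq_mul]
      nlinarith
    · have : ∀ i : Fin (n+1), σ i * (a • x + b • y) i = a * (σ i * x i) + b * (σ i * y i) := by
        intro i; simp only [PiLp.add_apply, PiLp.smul_apply, smul_eq_mul]; ring
      simp only [this, Finset.sum_add_distrib, ← Finset.mul_sum, hx.2, hy.2]; linarith
  have hsub : ∀ F ∈ 𝓕, F ⊆ Octa n := by
    rintro _ ⟨σ, hσ, rfl⟩ x hx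
    have : ∀ i : Fin (n+1), |x i| = σ i * x i := by
      intro i
      rw [← abs_of_nonneg (hx.1 i), abs_mul]
      rcases hσ i with h | h <;> simp [h]
    simp only [Octa, mem_ofPred_eq, this]
    exact hx.2
  have hdiam : ∀ x ∈ Octa n, ‖x‖ ≤ n + 1 := by
    intro x hx
    have h1 : ∀ i, |x i| ≤ 1 := fun i => by
      have : |x i| ≤ ∑ i, |x i| := Finset.single_le_sum (f := fun i => |x i|) (fun _ _ => abs_nonneg _) (Finset.mem_univ i)
      rw [hx] at this; exact this
    rw [EuclideanSpace.norm_eq, Real.sqrt_le_left (by positivity)]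
    calc ∑ i, ‖x i‖ ^ 2 ≤ ∑ i : Fin (n+1), (1:ℝ) := by
          refine Finset.sum_le_sum fun i _ => ?_
          rw [Real.norm_eq_abs]
          exact pow_le_one₀ (abs_nonneg _) (h1 i)
      _ = n + 1 := by simp
      _ ≤ (n + 1 : ℝ) ^ 2 := by nlinarith [(Nat.cast_nonneg n : (0:ℝ) ≤ n)]
  set D : ℝ := 2 * (n + 1) with hDd
  have hD : 0 ≤ D := by positivity
  obtain ⟨m, hm⟩ : ∃ m : ℕ, (n / (n + 1) : ℝ) ^ m * D < δ := by
    obtain ⟨m, hm⟩ := exists_pow_lt_of_lt_one (x := δ / D) (y := (n / (n + 1) : ℝ)) (by positivity)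
      ((div_lt_one (by positivity)).2 (by linarith))
    exact ⟨m, by rwa [lt_div_iff₀ (by positivity)] at hm⟩
  have hstart : ∀ k ≤ n, hemi e k ∈ Sp (fun l => ∃ F ∈ 𝓕, Fine (k + 1) F D l) := by
    intro k hk
    refine Sp_mono ?_ (hemi_mem e k)
    rintro l ⟨h1, σ, hσ, h2⟩
    have hF : face σ ∈ 𝓕 := ⟨σ, hσ, rfl⟩
    have hl : ∀ v ∈ l, v ∈ face σ := by
      intro v hv
      obtain ⟨i, hi, rfl⟩ := h2 v hv
      have hi' : i < n + 1 := by omega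
      have hsq : σ i * σ i = 1 := by rcases hσ i with h | h <;> simp [h]
      have : ∀ j : Fin (n + 1), σ j * (σ i • e i) j = if j = ⟨i, hi'⟩ then 1 else 0 := by
        intro j
        simp only [e, hi', dif_pos, PiLp.smul_apply, EuclideanSpace.single_apply, smul_eq_mul]
        split_ifs with h
        · subst h; simp [hsq]
        · simp
      refine ⟨fun j => ?_, ?_⟩
      · rw [this]; split_ifs <;> norm_num
      · exact (Finset.sum_congr rfl (fun j _ => this j)).trans (by simp)
    refine ⟨_, hF, h1, hl, fun v hv w hw => ?_⟩
    rw [dist_eq_norm]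
    refine (norm_sub_le _ _).trans ?_
    have := hdiam v (hsub _ hF (hl v hv))
    have := hdiam w (hsub _ hF (hl w hw))
    linarith
  let c : ℕ → Ch (Eu n) := fun k => (Sd (k + 1))^[m] (hemi e k)
  have hcf : ∀ k ≤ n, c k ∈ Sp (fun l => ∃ F ∈ 𝓕, Fine (k + 1) F ((n / (n + 1) : ℝ) ^ m * D) l) :=
    fun k hk => Sd_iter_fine n (k + 1) (by omega) 𝓕 hconv D hD _ (hstart k hk) m
  have hmain := chain_main s (Octa n) hs c n ⟨e 0, Sd_one_iter _ _⟩ ?_ ?_ n le_rfl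
  · by_contra hcon
    push Not at hcon
    have h0 : lin (gg s n) (c n) = 0 := by
      have := map_mem (P := ⊥) (T := lin (gg s n)) ?_ (hcf n le_rfl)
      · simpa using this
      rintro l ⟨F, hF, hl⟩
      rw [lin_single, Submodule.mem_bot]
      obtain ⟨j, hj, c, hc⟩ := hcon l (by rintro rfl; simp [Fine] at hl)
        (fun v hv => hsub F hF (hl.2.1 v hv)) (fun v hv w hw => (hl.2.2 v hv w hw).trans hm.le)
      exact gg_zero s j c n hj l hc
    rw [h0] at hmain
    exact absurd hmain (by decide)
  · intro k hk
    refine Sp_mono ?_ (hcf k hk)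
    rintro l ⟨F, hF, hl⟩
    exact ⟨hl.1, fun v hv => hsub F hF (hl.2.1 v hv)⟩
  · intro k hk
    have h1 : ∀ (m : ℕ) (x : Ch (Eu n)), bd ((Sd (k + 2))^[m] x) = (Sd (k + 1))^[m] (bd x) := by
      intro m; induction m with
      | zero => intro x; rfl
      | succ m ih => intro x; rw [Function.iterate_succ_apply, ih, bd_Sd, Function.iterate_succ_apply]
    have h2 : ∀ (m : ℕ) (x : Ch (Eu n)), nu ((Sd (k + 1))^[m] x) = (Sd (k + 1))^[m] (nu x) := by
      intro m; induction m with
      | zero => intro x; rfl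
      | succ m ih => intro x; rw [Function.iterate_succ_apply, ih, nu_Sd, Function.iterate_succ_apply]
    change bd ((Sd (k + 2))^[m] (hemi e (k + 1))) = _
    rw [h1, bd_hemi, h2]
    exact iterate_map_add (Sd (k + 1)) m _ _

end LSchain

section Geometry

open Filter Topology

lemma exists_slice {M : Type} [MetricSpace M] [MeasurableSpace M] [BorelSpace M] (n : ℕ)
    (A : Set M) (x : M) (R : ℝ) (hR : 0 < R) :
    ∃ r ∈ Ioo (R / 2) R, μH[(n : ℝ)] (A ∩ sphere x r) ≤
      μH[((n + 1 : ℕ) : ℝ)] A / ENNReal.ofReal (R / 2) := by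
  by_cases hinf : μH[((n + 1 : ℕ) : ℝ)] A = ∞
  · refine ⟨3 * R / 4, ⟨by linarith, by linarith⟩, ?_⟩
    rw [hinf, ENNReal.top_div_of_ne_top ENNReal.ofReal_ne_top]; exact le_top
  set H := μH[((n + 1 : ℕ) : ℝ)] A with hH
  set ρ : ℕ → ℝ≥0∞ := fun k => ((k : ℝ≥0∞) + 1)⁻¹ with hρ
  have hρpos : ∀ k, 0 < ρ k := fun k => by
    rw [hρ]; exact ENNReal.inv_pos.2 (by finiteness)
  have hρlim : Tendsto ρ atTop (𝓝 0) := by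
    have := (tendsto_add_atTop_iff_nat (f := fun n : ℕ => ((n : ℝ≥0∞))⁻¹) 1).2 ENNReal.tendsto_inv_nat_nhds_zero
    simpa [hρ] using this
  have hcov : ∀ k, ∃ t : ℕ → Set M, A ⊆ ⋃ i, t i ∧ (∀ i, ediam (t i) ≤ ρ k) ∧
      ∑' i, (⨆ _ : (t i).Nonempty, ediam (t i) ^ (((n + 1 : ℕ) : ℝ))) ≤ H + ρ k := by
    intro k
    have h1 : (⨅ (t : ℕ → Set M) (_ : A ⊆ ⋃ i, t i) (_ : ∀ i, ediam (t i) ≤ ρ k),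
        ∑' i, ⨆ _ : (t i).Nonempty, ediam (t i) ^ (((n + 1 : ℕ) : ℝ))) ≤ H := by
      rw [hH, Measure.hausdorffMeasure_apply]
      exact le_iSup₂ (f := fun (r : ℝ≥0∞) (_ : 0 < r) => ⨅ (t : ℕ → Set M) (_ : A ⊆ ⋃ i, t i)
        (_ : ∀ i, ediam (t i) ≤ r),
        ∑' i, ⨆ _ : (t i).Nonempty, ediam (t i) ^ (((n + 1 : ℕ) : ℝ))) (ρ k) (hρpos k)
    have h2 := h1.trans_lt (ENNReal.lt_add_right hinf (hρpos k).ne')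
    simp only [iInf_lt_iff] at h2
    obtain ⟨t, h3, h4, h5⟩ := h2
    exact ⟨t, h3, h4, h5.le⟩
  choose t ht1 ht2 ht3 using hcov
  set J : ℕ → ℕ → Set ℝ := fun k i => closure ((fun y => dist y x) '' t k i) with hJ
  set g : ℕ → ℝ → ℝ≥0∞ := fun k r => ∑' i, (J k i).indicator (fun _ => ediam (t k i) ^ (n : ℝ)) r with hg
  have hJm : ∀ k i, MeasurableSet (J k i) := fun k i => isClosed_closure.measurableSet
  have hgm : ∀ k, Measurable (g k) := fun k =>
    Measurable.tsum fun i => measurable_const.indicator (hJm k i)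
  have hgint : ∀ k, ∫⁻ r, g k r ≤ H + ρ k := by
    intro k
    rw [hg, lintegral_tsum (fun i => (measurable_const.indicator (hJm k i)).aemeasurable)]
    refine le_trans (ENNReal.tsum_le_tsum fun i => ?_) (ht3 k)
    rw [lintegral_indicator_const (hJm k i)]
    by_cases hne : (t k i).Nonempty
    · rw [iSup_pos hne]
      have hv : volume (J k i) ≤ ediam (t k i) := by
        refine (Real.volume_le_diam _).trans ?_
        rw [hJ, Metric.ediam_closure]
        have := (LipschitzWith.dist_left x).ediam_image_le (t k i)
        simpa using this
      calc _ ≤ ediam (t k i) ^ (n : ℝ) * ediam (t k i) := by gcongr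
        _ = _ := by
          rw [ENNReal.rpow_natCast, ENNReal.rpow_natCast, pow_succ]
    · rw [Set.not_nonempty_iff_eq_empty] at hne
      simp [hJ, hne]
  have hslice : ∀ r, μH[(n : ℝ)] (A ∩ sphere x r) ≤ liminf (fun k => g k r) atTop := by
    intro r
    refine (Measure.hausdorffMeasure_le_liminf_tsum
      (ι := fun k => ({i | (t k i ∩ sphere x r).Nonempty} : Set ℕ))
      (n : ℝ) (A ∩ sphere x r) ρ hρlim (fun k i => t k i)
      (Eventually.of_forall fun k i => ht2 k i) (Eventually.of_forall fun k y hy => ?_)).trans ?_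
    · obtain ⟨i, hi⟩ := mem_iUnion.1 (ht1 k hy.1)
      exact mem_iUnion.2 ⟨⟨i, ⟨y, hi, hy.2⟩⟩, hi⟩
    · refine liminf_le_liminf (Eventually.of_forall fun k => ?_)
      rw [hg, tsum_subtype {i | (t k i ∩ sphere x r).Nonempty} (fun i => ediam (t k i) ^ (n : ℝ))]
      refine ENNReal.tsum_le_tsum fun i => ?_
      by_cases hi : i ∈ {i | (t k i ∩ sphere x r).Nonempty}
      · rw [indicator_of_mem hi]
        obtain ⟨y, hy1, hy2⟩ := hi
        have : r ∈ J k i := subset_closure ⟨y, hy1, hy2⟩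
        rw [indicator_of_mem this]
      · rw [indicator_of_notMem hi]; exact zero_le
  have hlm : Measurable (fun r => liminf (fun k => g k r) atTop) := Measurable.liminf hgm
  have hint : ∫⁻ r in Ioo (R / 2) R, liminf (fun k => g k r) atTop ≤ H := by
    refine (setLIntegral_le_lintegral _ _).trans ((lintegral_liminf_le hgm).trans ?_)
    have h1 : Tendsto (fun k => H + ρ k) atTop (𝓝 (H + 0)) := hρlim.const_add H
    rw [add_zero] at h1
    rw [← h1.liminf_eq]
    exact liminf_le_liminf (Eventually.of_forall hgint)
  have hvol : volume (Ioo (R / 2) R) = ENNReal.ofReal (R / 2) := by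
    rw [Real.volume_Ioo]; congr 1; ring
  obtain ⟨r, hr, hr2⟩ := exists_le_setLAverage (μ := volume) (s := Ioo (R / 2) R)
    (by rw [hvol]; simpa using hR) (by rw [hvol]; finiteness) hlm.aemeasurable
  refine ⟨r, hr, (hslice r).trans (hr2.trans ?_)⟩
  rw [setLAverage_eq, hvol]
  gcongr

/-- Admissible cuts of `Z` at scale `R`. -/
def Cut {M : Type} [MetricSpace M] (Z : Set M) (R : ℝ) (Z' : Set M) : Prop :=
  IsClosed Z' ∧ Z' ⊆ Z ∧ ∃ a : M → M, ∀ z ∈ Z, z ∉ Z' →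
    dist z (a z) < R ∧ ∀ᶠ y in 𝓝 z, y ∈ Z → a y = a z

lemma Cut.replace {M : Type} [MetricSpace M] {Z Z' : Set M} {R : ℝ} (hZ : IsClosed Z)
    (h : Cut Z R Z') (x : M) (r : ℝ) (hr : r ≤ R) :
    Cut Z R ((Z' \ ball x r) ∪ (Z ∩ sphere x r)) := by
  classical
  obtain ⟨h1, h2, a, ha⟩ := h
  refine ⟨(h1.sdiff isOpen_ball).union (hZ.inter isClosed_sphere),
    union_subset (sdiff_subset.trans h2) inter_subset_left,
    fun z => if z ∈ ball x r then x else a z, ?_⟩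
  intro z hz hz'
  simp only [mem_union, Set.mem_sdiff, mem_inter_iff, not_or, not_and, not_not] at hz'
  dsimp only
  by_cases hb : z ∈ ball x r
  · refine ⟨?_, ?_⟩
    · rw [if_pos hb]; exact lt_of_lt_of_le hb hr
    · filter_upwards [isOpen_ball.mem_nhds hb] with y hy _
      rw [if_pos hy, if_pos hb]
  · have hzZ : z ∉ Z' := fun h => hb (hz'.1 h)
    have hcb : z ∈ (closedBall x r)ᶜ := by
      intro hc
      have h3 := hz'.2 hz
      rw [mem_closedBall] at hc
      rw [mem_ball, not_lt] at hb
      exact h3 (le_antisymm hc hb)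
    refine ⟨by rw [if_neg hb]; exact (ha z hz hzZ).1, ?_⟩
    filter_upwards [(ha z hz hzZ).2, isClosed_closedBall.isOpen_compl.mem_nhds hcb] with y hy hy2 hyZ
    have : y ∉ ball x r := fun h => hy2 (ball_subset_closedBall h)
    rw [if_neg this, if_neg hb]; exact hy hyZ

lemma exists_good_cut {M : Type} [MetricSpace M] [CompactSpace M] [MeasurableSpace M] [BorelSpace M]
    (n : ℕ) (ε : ℝ) (hε : 0 < ε) (Z : Set M) (hZ : IsClosed Z) (R : ℝ) (hR : 0 < R)
    (h : ∀ x, μH[((n + 1 : ℕ) : ℝ)] (Z ∩ ball x R) ≤ ENNReal.ofReal (ε * R ^ (n + 1))) :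
    ∃ Z', Cut Z R Z' ∧ ∀ x, μH[(n : ℝ)] (Z' ∩ ball x (R / 2)) ≤ ENNReal.ofReal (3 * ε * R ^ n) := by
  classical
  have hs : ∀ x, ∃ r ∈ Ioo (R / 2) R, μH[(n : ℝ)] (Z ∩ sphere x r) ≤ ENNReal.ofReal (2 * ε * R ^ n) := by
    intro x
    obtain ⟨r, hr, hr2⟩ := exists_slice n (Z ∩ ball x R) x R hR
    refine ⟨r, hr, ?_⟩
    have : Z ∩ ball x R ∩ sphere x r = Z ∩ sphere x r := by
      ext y; simp only [mem_inter_iff, mem_ball, mem_sphere]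
      constructor
      · rintro ⟨⟨a, b⟩, c⟩; exact ⟨a, c⟩
      · rintro ⟨a, c⟩; exact ⟨⟨a, by rw [c]; exact hr.2⟩, c⟩
    rw [this] at hr2
    refine hr2.trans ?_
    calc _ ≤ ENNReal.ofReal (ε * R ^ (n + 1)) / ENNReal.ofReal (R / 2) := by gcongr; exact h x
      _ = _ := by
        rw [← ENNReal.ofReal_div_of_pos (by positivity)]
        congr 1; field_simp; ring
  choose r hr hr2 using hs
  -- a cut of finite measure
  have hfin : ∀ F : Finset M, ∃ Z', Cut Z R Z' ∧
      μH[(n : ℝ)] (Z' ∩ ⋃ x ∈ F, ball x (R / 2)) < ∞ := by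
    intro F
    induction F using Finset.induction_on with
    | empty =>
      refine ⟨Z, ⟨hZ, le_rfl, id, fun z hz hz' => absurd hz hz'⟩, by simp⟩
    | insert x F _ ih =>
      obtain ⟨Z', hZ', hf⟩ := ih
      refine ⟨_, hZ'.replace hZ x (r x) (hr x).2.le, ?_⟩
      have hsub : ((Z' \ ball x (r x)) ∪ (Z ∩ sphere x (r x))) ∩ (⋃ y ∈ insert x F, ball y (R / 2)) ⊆
          (Z' ∩ ⋃ x ∈ F, ball x (R / 2)) ∪ (Z ∩ sphere x (r x)) := by
        rintro z ⟨hz | hz, hz2⟩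
        · left
          refine ⟨hz.1, ?_⟩
          simp only [mem_iUnion, Finset.mem_insert, exists_prop] at hz2 ⊢
          obtain ⟨y, rfl | hy, hzy⟩ := hz2
          · exact absurd (ball_subset_ball (hr y).1.le hzy) hz.2
          · exact ⟨y, hy, hzy⟩
        · right; exact hz
      refine (measure_mono hsub).trans_lt ((measure_union_le _ _).trans_lt ?_)
      exact ENNReal.add_lt_top.2 ⟨hf, (hr2 x).trans_lt ENNReal.ofReal_lt_top⟩
  obtain ⟨Z₀, hZ₀, hZ₀fin⟩ : ∃ Z', Cut Z R Z' ∧ μH[(n : ℝ)] Z' < ∞ := by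
    obtain ⟨F, hF⟩ := (isCompact_univ (X := M)).elim_finite_subcover (fun x : M => ball x (R / 2))
      (fun _ => isOpen_ball) (fun y _ => mem_iUnion.2 ⟨y, mem_ball_self (by positivity)⟩)
    obtain ⟨Z', h1, h2⟩ := hfin F
    refine ⟨Z', h1, ?_⟩
    rwa [inter_eq_left.2 ((subset_univ _).trans hF)] at h2
  set I : ℝ≥0∞ := ⨅ (Z' : Set M) (_ : Cut Z R Z'), μH[(n : ℝ)] Z' with hI
  have hIle : ∀ Z', Cut Z R Z' → I ≤ μH[(n : ℝ)] Z' := fun Z' h => iInf₂_le Z' h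
  have hIfin : I ≠ ∞ := ((hIle _ hZ₀).trans_lt hZ₀fin).ne
  have hη : (0 : ℝ≥0∞) < ENNReal.ofReal (ε * R ^ n) := ENNReal.ofReal_pos.2 (by positivity)
  obtain ⟨Z', hZ', hlt⟩ : ∃ Z', Cut Z R Z' ∧ μH[(n : ℝ)] Z' < I + ENNReal.ofReal (ε * R ^ n) := by
    have h2 := ENNReal.lt_add_right hIfin hη.ne'
    conv_lhs at h2 => rw [hI]
    simp only [iInf_lt_iff] at h2
    obtain ⟨Z', h3, h4⟩ := h2
    exact ⟨Z', h3, h4⟩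
  refine ⟨Z', hZ', fun x => ?_⟩
  have h1 := hIle _ (hZ'.replace hZ x (r x) (hr x).2.le)
  have h2 := h1.trans (measure_union_le _ _)
  have h3 : μH[(n : ℝ)] Z' = μH[(n : ℝ)] (Z' ∩ ball x (r x)) + μH[(n : ℝ)] (Z' \ ball x (r x)) :=
    (measure_inter_add_sdiff _ measurableSet_ball).symm
  have hd : μH[(n : ℝ)] (Z' \ ball x (r x)) ≠ ∞ := by
    have : μH[(n : ℝ)] Z' < ∞ := hlt.trans_le le_top
    exact ((measure_mono sdiff_subset).trans_lt this).ne
  have h4 : μH[(n : ℝ)] (Z' ∩ ball x (r x)) + μH[(n : ℝ)] (Z' \ ball x (r x)) ≤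
      (ENNReal.ofReal (2 * ε * R ^ n) + ENNReal.ofReal (ε * R ^ n)) +
        μH[(n : ℝ)] (Z' \ ball x (r x)) := by
    rw [← h3]
    refine hlt.le.trans ?_
    calc _ ≤ (μH[(n : ℝ)] (Z' \ ball x (r x)) + ENNReal.ofReal (2 * ε * R ^ n)) + ENNReal.ofReal (ε * R ^ n) := by
          gcongr; exact h2.trans (by gcongr; exact hr2 x)
      _ = _ := by ring
  have h5 := (ENNReal.add_le_add_iff_right hd).1 h4
  refine (measure_mono (inter_subset_inter_right _ (ball_subset_ball (hr x).1.le))).trans (h5.trans ?_)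
  rw [← ENNReal.ofReal_add (by positivity) (by positivity)]
  exact ENNReal.ofReal_le_ofReal (by linarith)

theorem decomp (n : ℕ) : ∃ ε : ℝ, 0 < ε ∧ ∀ (M : Type) [MetricSpace M] [CompactSpace M]
    [MeasurableSpace M] [BorelSpace M] (Z : Set M) (_ : IsClosed Z) (R : ℝ) (_ : 0 < R),
    (∀ x, μH[(n : ℝ)] (Z ∩ ball x R) ≤ ENNReal.ofReal (ε * R ^ n)) →
    ∃ (col : M → ℕ) (ctr : M → M) (δ : ℝ), 0 < δ ∧ ∀ z ∈ Z, col z < n ∧ dist z (ctr z) < R ∧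
      ∀ w ∈ Z, col z = col w → dist z w < δ → ctr z = ctr w := by
  induction n with
  | zero =>
    refine ⟨1 / 2, by norm_num, ?_⟩
    intro M _ _ _ _ Z hZ R hR h
    refine ⟨fun _ => 0, id, 1, one_pos, fun z hz => ?_⟩
    exfalso
    have h1 : μH[((0:ℕ) : ℝ)] {z} ≤ ENNReal.ofReal (1 / 2 * R ^ 0) :=
      (measure_mono (by rintro _ rfl; exact ⟨hz, mem_ball_self hR⟩)).trans (h z)
    rw [Nat.cast_zero, Measure.hausdorffMeasure_zero_singleton, ENNReal.one_le_ofReal] at h1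
    norm_num at h1
  | succ n ih =>
    classical
    obtain ⟨ε, hε, ih⟩ := ih
    refine ⟨ε / (3 * 2 ^ n), by positivity, ?_⟩
    intro M _ _ _ _ Z hZ R hR h
    obtain ⟨Z', ⟨hZ'c, hZ'Z, a, ha⟩, hZ'm⟩ := exists_good_cut n _ (by positivity) Z hZ R hR h
    obtain ⟨col, ctr, δ, hδ, hcc⟩ := ih M Z' hZ'c (R / 2) (by positivity) (fun x => by
      refine (hZ'm x).trans (ENNReal.ofReal_le_ofReal (le_of_eq ?_))
      rw [div_pow]; field_simp)
    set η := min (δ / 3) (R / 2) with hη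
    have hηpos : 0 < η := by positivity
    have hη1 : η ≤ δ / 3 := min_le_left _ _
    have hη2 : η ≤ R / 2 := min_le_right _ _
    -- Lebesgue number
    set K := Z \ thickening η Z' with hK
    have hKc : IsCompact K := (hZ.sdiff isOpen_thickening).isCompact
    have hKZ' : ∀ z ∈ K, z ∉ Z' := fun z hz h => hz.2 (self_subset_thickening hηpos _ h)
    have hloc : ∀ z : K, ∃ ρ > 0, ∀ y ∈ ball (z : M) ρ, y ∈ Z → a y = a z := fun z =>
      Metric.eventually_nhds_iff_ball.1 (ha z z.2.1 (hKZ' z z.2)).2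
    choose ρ hρ hρa using hloc
    obtain ⟨δ', hδ', hleb⟩ := lebesgue_number_lemma_of_metric hKc
      (c := fun z : K => ball (z : M) (ρ z)) (fun _ => isOpen_ball)
      (fun z hz => mem_iUnion.2 ⟨⟨z, hz⟩, mem_ball_self (hρ _)⟩)
    -- projection
    have hproj : ∀ z, ∃ w, z ∈ thickening η Z' → w ∈ Z' ∧ dist z w < η := by
      intro z
      by_cases hz : z ∈ thickening η Z'
      · obtain ⟨w, hw, hd⟩ := mem_thickening_iff.1 hz
        exact ⟨w, fun _ => ⟨hw, hd⟩⟩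
      · exact ⟨z, fun h => absurd h hz⟩
    choose π hπ using hproj
    refine ⟨fun z => if z ∈ thickening η Z' then col (π z) else n,
      fun z => if z ∈ thickening η Z' then ctr (π z) else a z, min (δ / 3) δ', by positivity, ?_⟩
    intro z hz
    by_cases hzt : z ∈ thickening η Z'
    · simp only [if_pos hzt]
      obtain ⟨h1, h2⟩ := hπ z hzt
      obtain ⟨c1, c2, c3⟩ := hcc _ h1
      refine ⟨by omega, ?_, ?_⟩
      · have := dist_triangle z (π z) (ctr (π z)); linarith
      · intro w hw hcol hd
        by_cases hwt : w ∈ thickening η Z'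
        · simp only [if_pos hwt] at hcol ⊢
          obtain ⟨h3, h4⟩ := hπ w hwt
          refine c3 _ h3 hcol ?_
          have e1 := dist_triangle4 (π z) z w (π w)
          rw [dist_comm (π z) z] at e1
          have := hd.trans_le (min_le_left _ _)
          linarith
        · simp only [if_neg hwt] at hcol; omega
    · simp only [if_neg hzt]
      have hzK : z ∈ K := ⟨hz, hzt⟩
      refine ⟨by omega, (ha z hz (hKZ' z hzK)).1, ?_⟩
      intro w hw hcol hd
      by_cases hwt : w ∈ thickening η Z'
      · simp only [if_pos hwt] at hcol
        have := (hcc _ (hπ w hwt).1).1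
        omega
      · simp only [if_neg hwt]
        obtain ⟨i, hi⟩ := hleb z hzK
        rw [hρa i z (hi (mem_ball_self hδ')) hz, hρa i w (hi ?_) hw]
        rw [mem_ball, dist_comm]; exact hd.trans_le (min_le_right _ _)

end Geometry

section Topo

open Filter Topology unitInterval LSchain

lemma eu_self_neg (n : ℕ) (x : Eu n) (h : x = -x) : x = 0 := by
  have h1 : (2 : ℝ) • x = 0 := by
    rw [two_smul]; nth_rewrite 2 [h]; exact add_neg_cancel x
  exact (smul_eq_zero.1 h1).resolve_left two_ne_zero

theorem LS_sets (n : ℕ) (B : ℕ → Set (sphere (0 : Eu n) 1)) (hB : ∀ j, IsOpen (B j))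
    (hdisj : ∀ j w, w ∈ B j → -w ∉ B j) (hcov : ∀ w, ∃ j < n, w ∈ B j ∨ -w ∈ B j) : False := by
  classical
  have hB' : ∀ j, ∃ B' : Set (Eu n), IsOpen B' ∧ Subtype.val ⁻¹' B' = B j := fun j =>
    isOpen_induced_iff.1 (hB j)
  choose B' hB'o hB'e using hB'
  have hmem : ∀ j (w : sphere (0 : Eu n) 1), w ∈ B j ↔ (w : Eu n) ∈ B' j := fun j w => by
    rw [← hB'e j]; rfl
  let O : ℕ → Set (Eu n) := fun j => {x | x ≠ 0} ∩ (fun x : Eu n => ‖x‖⁻¹ • x) ⁻¹' B' j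
  have hO : ∀ j, IsOpen (O j) := by
    intro j
    refine ContinuousOn.isOpen_inter_preimage ?_ isOpen_ne (hB'o j)
    exact (continuous_norm.continuousOn.inv₀ (fun x hx => norm_ne_zero_iff.2 hx)).smul continuousOn_id
  have hsph : ∀ x : Eu n, x ≠ 0 → ‖x‖⁻¹ • x ∈ sphere (0 : Eu n) 1 := by
    intro x hx
    rw [mem_sphere_zero_iff_norm, norm_smul, norm_inv, norm_norm,
      inv_mul_cancel₀ (norm_ne_zero_iff.2 hx)]
  have hOmem : ∀ j x (hx : x ≠ 0), x ∈ O j ↔ (⟨_, hsph x hx⟩ : sphere (0 : Eu n) 1) ∈ B j := by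
    intro j x hx
    rw [hmem]; exact ⟨fun h => h.2, fun h => ⟨hx, h⟩⟩
  have hOneg : ∀ j x (hx : x ≠ 0), -x ∈ O j ↔ -(⟨_, hsph x hx⟩ : sphere (0 : Eu n) 1) ∈ B j := by
    intro j x hx
    rw [hOmem j (-x) (neg_ne_zero.2 hx)]
    have : (⟨_, hsph (-x) (neg_ne_zero.2 hx)⟩ : sphere (0 : Eu n) 1) = -⟨_, hsph x hx⟩ := by
      apply Subtype.ext; simp
    rw [this]
  have hOdisj : ∀ j x, x ∈ O j → -x ∉ O j := by
    intro j x hx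
    rw [hOneg j x hx.1]
    exact hdisj j _ ((hOmem j x hx.1).1 hx)
  have h0 : ∀ x ∈ Octa n, x ≠ 0 := by
    rintro x hx rfl
    simp [Octa] at hx
  have hOcta : IsCompact (Octa n) := by
    refine Metric.isCompact_of_isClosed_isBounded ?_ ?_
    · refine isClosed_eq ?_ continuous_const
      fun_prop
    · refine (Metric.isBounded_iff_subset_closedBall 0).2 ⟨n + 1, fun x hx => ?_⟩
      rw [mem_closedBall_zero_iff]
      have h1 : ∀ i, |x i| ≤ 1 := fun i => by
        have : |x i| ≤ ∑ i, |x i| := Finset.single_le_sum (f := fun i => |x i|) (fun _ _ => abs_nonneg _) (Finset.mem_univ i)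
        rw [hx] at this; exact this
      rw [EuclideanSpace.norm_eq, Real.sqrt_le_left (by positivity)]
      calc ∑ i, ‖x i‖ ^ 2 ≤ ∑ i : Fin (n+1), (1:ℝ) := by
            refine Finset.sum_le_sum fun i _ => ?_
            rw [Real.norm_eq_abs]
            exact pow_le_one₀ (abs_nonneg _) (h1 i)
        _ = n + 1 := by simp
        _ ≤ (n + 1 : ℝ) ^ 2 := by nlinarith [(Nat.cast_nonneg n : (0:ℝ) ≤ n)]
  obtain ⟨δ, hδ, hleb⟩ := lebesgue_number_lemma_of_metric hOcta
    (c := fun i : Fin n × Bool => if i.2 then O i.1 else -O i.1) (fun i => by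
      split_ifs
      · exact hO _
      · exact (hO _).neg) (fun x hx => by
      obtain ⟨j, hj, h⟩ := hcov ⟨_, hsph x (h0 x hx)⟩
      rw [← hOmem j x (h0 x hx), ← hOneg j x (h0 x hx)] at h
      rcases h with h | h
      · exact mem_iUnion.2 ⟨(⟨j, hj⟩, true), by simpa using h⟩
      · exact mem_iUnion.2 ⟨(⟨j, hj⟩, false), by simpa using h⟩)
  let t : Eu n → ZMod 2 := fun x => if WellOrderingRel x (-x) then 1 else 0
  have ht : ∀ x, x ≠ 0 → t (-x) = t x + 1 := by
    intro x hx
    have hne : x ≠ -x := fun h => hx (eu_self_neg n x h)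
    simp only [t, neg_neg]
    rcases trichotomous_of WellOrderingRel x (-x) with h | h | h
    · rw [if_pos h, if_neg (asymm_of WellOrderingRel h)]; decide
    · exact absurd h hne
    · rw [if_pos h, if_neg (asymm_of WellOrderingRel h)]; decide
  let s : ℕ → Eu n → ZMod 2 := fun j x => if x ∈ O j then 1 else if -x ∈ O j then 0 else t x
  have hs : ∀ j, ∀ x ∈ Octa n, s j (-x) = s j x + 1 := by
    intro j x hx
    simp only [s, neg_neg]
    by_cases h1 : x ∈ O j
    · rw [if_neg (hOdisj j x h1), if_pos h1, if_pos h1]; decide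
    · by_cases h2 : -x ∈ O j
      · rw [if_pos h2, if_neg h1, if_pos h2]; decide
      · rw [if_neg h2, if_neg h1, if_neg h1, if_neg h2]; exact ht x (h0 x hx)
  obtain ⟨l, hl, hlO, hld, hlc⟩ := LS_lists n s hs (δ / 2) (by positivity)
  obtain ⟨v0, hv0⟩ := List.exists_mem_of_ne_nil l hl
  obtain ⟨⟨j, b⟩, hjb⟩ := hleb v0 (hlO v0 hv0)
  have hall : ∀ v ∈ l, v ∈ (if b then O j else -O j) := fun v hv => hjb (by
    rw [mem_ball]; exact (hld v hv v0 hv0).trans_lt (by linarith))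
  refine hlc j j.2 ⟨if b then 1 else 0, fun v hv => ?_⟩
  have := hall v hv
  cases b
  · simp only [Bool.false_eq_true, if_false, Set.mem_neg] at this ⊢
    simp only [s]
    rw [if_neg (fun h => hOdisj j v h this), if_pos this]
  · simp only [if_true] at this ⊢
    simp only [s]
    rw [if_pos this]

lemma eVariationOn_trans {S M : Type} [TopologicalSpace S] [PseudoEMetricSpace M] (p : S → M)
    {a b c : S} (γ : Path a b) (γ' : Path b c) :
    eVariationOn (fun t => p (γ.trans γ' t)) univ ≤
      eVariationOn (fun t => p (γ t)) univ + eVariationOn (fun t => p (γ' t)) univ := by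
  let h : I := ⟨1 / 2, by norm_num, by norm_num⟩
  have hu : (univ : Set I) = Iic h ∪ Ici h := Iic_union_Ici.symm
  rw [hu, eVariationOn.union _ (isGreatest_Iic (a := h)) (isLeast_Ici (a := h)), ← hu]
  refine add_le_add ?_ ?_
  · let φ : I → I := fun t => Set.projIcc 0 1 zero_le_one (2 * (t : ℝ))
    have hφ : MonotoneOn φ (Iic h) := fun x _ y _ hxy => Set.monotone_projIcc _ (by
      have : (x : ℝ) ≤ y := hxy
      linarith)
    refine le_trans (le_of_eq ?_) (eVariationOn.comp_le_of_monotoneOn (fun t => p (γ t)) φ hφ (mapsTo_univ _ _))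
    refine eVariationOn.congr fun t ht => ?_
    have ht' : (t : ℝ) ≤ 1 / 2 := ht
    simp only [Path.trans_apply, ht', dif_pos, Function.comp, φ]
    congr 2
    rw [Set.projIcc_of_mem]
  · let φ : I → I := fun t => Set.projIcc 0 1 zero_le_one (2 * (t : ℝ) - 1)
    have hφ : MonotoneOn φ (Ici h) := fun x _ y _ hxy => Set.monotone_projIcc _ (by
      have : (x : ℝ) ≤ y := hxy
      linarith)
    refine le_trans (le_of_eq ?_) (eVariationOn.comp_le_of_monotoneOn (fun t => p (γ' t)) φ hφ (mapsTo_univ _ _))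
    refine eVariationOn.congr fun t ht => ?_
    have ht' : 1 / 2 ≤ (t : ℝ) := ht
    simp only [Path.trans_apply, Function.comp, φ]
    by_cases h2 : (t : ℝ) ≤ 1 / 2
    · have h3 : (t : ℝ) = 1 / 2 := le_antisymm h2 ht'
      rw [dif_pos h2]
      have e1 : (⟨2 * (t : ℝ), (unitInterval.mul_pos_mem_iff zero_lt_two).2 ⟨t.2.1, h2⟩⟩ : I) = 1 :=
        Subtype.ext (by simp [h3])
      have e2 : Set.projIcc (0 : ℝ) 1 zero_le_one (2 * (t : ℝ) - 1) = (0 : I) := by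
        rw [h3]; norm_num
      rw [e1, e2, γ.target, γ'.source]
    · rw [dif_neg h2]
      congr 2
      rw [Set.projIcc_of_mem]

lemma eVariationOn_symm {S M : Type} [TopologicalSpace S] [PseudoEMetricSpace M] (p : S → M)
    {a b : S} (γ : Path a b) :
    eVariationOn (fun t => p (γ.symm t)) univ ≤ eVariationOn (fun t => p (γ t)) univ := by
  refine eVariationOn.comp_le_of_antitoneOn (fun t => p (γ t)) σ ?_ (mapsTo_univ _ _)
  intro x _ y _ hxy
  exact unitInterval.symm_le_symm.2 hxy

/-- The sheet over a ball: endpoints of short paths starting at `e`. -/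
def sheet {S M : Type} [TopologicalSpace S] [MetricSpace M] (p : S → M) (R : ℝ) (e : S) : Set S :=
  {w | ∃ γ : Path e w, eVariationOn (fun t => p (γ t)) univ < ENNReal.ofReal R}

section
variable {S M : Type} [MetricSpace S] [CompactSpace S] [InvolutiveNeg S] [ContinuousNeg S]
  [MetricSpace M] (p : S → M) (hp : IsCoveringMap p)
  (hpn : ∀ x y, p x = p y ↔ x = y ∨ x = -y) (hne : ∀ x : S, x ≠ -x)
  (hlen : IsLengthMetric M)

lemma lift_short (hp : IsCoveringMap p) (hlen : IsLengthMetric M) (e : S) (y : M) (r : ℝ≥0∞)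
    (h : edist (p e) y < r) :
    ∃ (w : S) (γ : Path e w), p w = y ∧ eVariationOn (fun t => p (γ t)) univ < r := by
  rw [hlen, iInf_lt_iff] at h
  obtain ⟨γ, hγ⟩ := h
  have h0 : γ.toContinuousMap 0 = p e := γ.source
  have hl := hp.liftPath_lifts γ.toContinuousMap e h0
  have hl' : ∀ t, p (hp.liftPath γ.toContinuousMap e h0 t) = γ t := fun t => congrFun hl t
  refine ⟨hp.liftPath γ.toContinuousMap e h0 1,
    ⟨hp.liftPath γ.toContinuousMap e h0, hp.liftPath_zero _ _ _, rfl⟩, ?_, ?_⟩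
  · rw [hl']; exact γ.target
  · refine lt_of_eq_of_lt ?_ hγ
    exact eVariationOn.congr fun t _ => hl' t

include hp hpn hlen in
lemma sheet_cover (R : ℝ) (e w : S) (h : dist (p w) (p e) < R) :
    w ∈ sheet p R e ∨ -w ∈ sheet p R e := by
  have h1 : edist (p e) (p w) < ENNReal.ofReal R := by
    rw [edist_dist, dist_comm]
    exact (ENNReal.ofReal_lt_ofReal_iff_of_nonneg dist_nonneg).2 h
  obtain ⟨w', γ, hw, hγ⟩ := lift_short p hp hlen e (p w) _ h1
  rcases (hpn _ _).1 hw with rfl | rfl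
  · exact Or.inl ⟨γ, hγ⟩
  · exact Or.inr ⟨γ, hγ⟩

include hp hpn hne in
lemma sheet_disj (R : ℝ) (hR : 0 < R) (hsys : ENNReal.ofReal (2 * R) < systole M) (e w : S)
    (h1 : w ∈ sheet p R e) : -w ∉ sheet p R e := by
  rintro ⟨γ2, h2⟩
  obtain ⟨γ1, h1⟩ := h1
  have hpneg : ∀ x, p (-x) = p x := fun x => (hpn _ _).2 (Or.inr rfl)
  let γ3 : Path (-e) w := (γ2.map continuous_neg).cast rfl (neg_neg w).symm
  have h3 : eVariationOn (fun t => p (γ3 t)) univ < ENNReal.ofReal R := by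
    refine lt_of_eq_of_lt ?_ h2
    exact eVariationOn.congr fun t _ => hpneg _
  let Γ : Path e (-e) := γ1.trans γ3.symm
  let loop : Path (p e) (p e) := (Γ.map hp.continuous).cast rfl (hpneg e).symm
  have hloop : pathLength loop < systole M := by
    refine lt_of_le_of_lt ?_ hsys
    have e1 : pathLength loop = eVariationOn (fun t => p (Γ t)) univ := rfl
    rw [e1]
    refine (eVariationOn_trans p γ1 γ3.symm).trans ?_
    rw [two_mul, ENNReal.ofReal_add hR.le hR.le]
    exact add_le_add h1.le ((eVariationOn_symm p γ3).trans h3.le)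
  have hhom : loop.Homotopic (Path.refl (p e)) := by
    by_contra hcon
    refine absurd hloop (not_lt.2 ?_)
    exact iInf_le_of_le (p e) (iInf_le_of_le loop (iInf_le _ hcon))
  have hh : loop.toContinuousMap.HomotopicRel (Path.refl (p e)).toContinuousMap {0, 1} := hhom
  have key := hp.liftPath_apply_one_eq_of_homotopicRel hh e loop.source (Path.refl (p e)).source
  have k1 : Γ.toContinuousMap = hp.liftPath loop.toContinuousMap e loop.source :=
    (hp.eq_liftPath_iff' _).2 ⟨rfl, Γ.source⟩
  have k2 : ContinuousMap.const I e =
      hp.liftPath (Path.refl (p e)).toContinuousMap e (Path.refl (p e)).source :=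
    (hp.eq_liftPath_iff' _).2 ⟨rfl, rfl⟩
  rw [← k1, ← k2] at key
  have : Γ 1 = e := key
  rw [Γ.target] at this
  exact hne e this.symm

include hp hpn hne hlen in
lemma sheet_open (R : ℝ) (e : S) : IsOpen (sheet p R e) := by
  rw [isOpen_iff_mem_nhds]
  rintro w ⟨γ, hγ⟩
  have hpneg : ∀ x, p (-x) = p x := fun x => (hpn _ _).2 (Or.inr rfl)
  obtain ⟨A, A', hA, hA', hwA, hwA', hAA⟩ := t2_separation (hne w)
  -- symmetrize
  let N : Set S := A ∩ -A'
  have hN : IsOpen N := hA.inter hA'.neg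
  have hwN : w ∈ N := ⟨hwA, by simpa using hwA'⟩
  have hNN : Disjoint N (-N) := by
    rw [Set.disjoint_left]
    rintro x ⟨hx, _⟩ hx'
    have : x ∈ A' := by simpa using hx'.2
    exact Set.disjoint_left.1 hAA hx this
  have hK : IsClosed (p '' (N ∪ -N)ᶜ) :=
    ((hN.union hN.neg).isClosed_compl.isCompact.image hp.continuous).isClosed
  have hwK : p w ∈ (p '' (N ∪ -N)ᶜ)ᶜ := by
    rintro ⟨x, hx, hxw⟩
    rcases (hpn _ _).1 hxw with rfl | rfl
    · exact hx (Or.inl hwN)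
    · exact hx (Or.inr (by simpa using hwN))
  obtain ⟨η, hη, hball⟩ := Metric.isOpen_iff.1 hK.isOpen_compl _ hwK
  set ℓ := eVariationOn (fun t => p (γ t)) univ with hℓ
  set r : ℝ≥0∞ := min (ENNReal.ofReal η) (ENNReal.ofReal R - ℓ) with hr
  have hrpos : 0 < r := lt_min (ENNReal.ofReal_pos.2 hη) (tsub_pos_of_lt hγ)
  have hnear : ∀ᶠ v in 𝓝 w, edist (p w) (p v) < r := by
    have : Tendsto (fun v => edist (p w) (p v)) (𝓝 w) (𝓝 (edist (p w) (p w))) :=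
      (continuous_const.edist hp.continuous).tendsto w
    rw [edist_self] at this
    exact this.eventually_lt_const hrpos
  filter_upwards [hnear, hN.mem_nhds hwN] with v hv hvN
  obtain ⟨v', β, hv', hβ⟩ := lift_short p hp hlen w (p v) r hv
  have hβN : ∀ t, β t ∈ N ∪ -N := by
    intro t
    by_contra hcon
    have h1 : edist (p (β t)) (p (β 0)) ≤ eVariationOn (fun t => p (β t)) univ :=
      eVariationOn.edist_le (fun t => p (β t)) (mem_univ _) (mem_univ _)
    rw [β.source] at h1
    have h2 := (h1.trans_lt hβ).trans_le (min_le_left _ _)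
    rw [edist_lt_ofReal] at h2
    exact absurd (mem_image_of_mem p hcon) (hball h2)
  have hv'N : v' ∈ N := by
    have hpre : IsPreconnected (range β) := isPreconnected_range β.continuous
    have := hpre.subset_left_of_subset_union hN hN.neg hNN (by rintro _ ⟨t, rfl⟩; exact hβN t)
      (⟨w, ⟨0, β.source⟩, hwN⟩ : (range β ∩ N).Nonempty)
    exact this ⟨1, β.target⟩
  have hvv : v' = v := by
    rcases (hpn _ _).1 hv' with h | rfl
    · exact h
    · exact absurd (by simpa using hvN : (-v) ∈ -N) (Set.disjoint_left.1 hNN hv'N)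
  subst hvv
  refine ⟨γ.trans β, (eVariationOn_trans p γ β).trans_lt ?_⟩
  have h3 := hβ.trans_le (min_le_right _ _)
  rw [add_comm]
  exact lt_tsub_iff_right.1 h3

end

/-- Action of `ℤˣ` on the sphere. -/
@[reducible] def sphereAct (n : ℕ) : MulAction ℤˣ (sphere (0 : Eu n) 1) where
  smul u x := if u = 1 then x else -x
  one_smul x := if_pos rfl
  mul_smul u v x := by
    change (if u * v = 1 then x else -x) = (if u = 1 then (if v = 1 then x else -x) else
      -(if v = 1 then x else -x))
    rcases Int.units_eq_one_or u with rfl | rfl <;> rcases Int.units_eq_one_or v with rfl | rfl <;>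
      simp

lemma sphere_ne_neg (n : ℕ) (x : sphere (0 : Eu n) 1) : x ≠ -x := by
  intro h
  have h1 : (x : Eu n) = -(x : Eu n) := congrArg Subtype.val h
  have h2 : (x : Eu n) = 0 := eu_self_neg n _ h1
  have h3 := mem_sphere_zero_iff_norm.1 x.2
  rw [h2] at h3; simp at h3

lemma proj_covering (n : ℕ) {M : Type} [TopologicalSpace M] (φ : RealProjectiveSpace n ≃ₜ M) :
    IsCoveringMap (φ ∘ Quotient.mk (antipodalSetoid n)) := by
  let _ := sphereAct n
  have hsm : ∀ x : sphere (0 : Eu n) 1, (-1 : ℤˣ) • x = -x := fun x => if_neg (by decide)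
  have : IsQuotientCoveringMap (Quotient.mk (antipodalSetoid n)) ℤˣ :=
    { isQuotientMap_quotient_mk' with
      continuous_const_smul := by
        intro u
        rcases Int.units_eq_one_or u with rfl | rfl
        · simp only [one_smul]; exact continuous_id
        · simpa only [hsm] using continuous_neg
      apply_eq_iff_mem_orbit := by
        intro x y
        rw [Quotient.eq]
        change ((x : Eu n) = y ∨ (x : Eu n) = -(y : Eu n)) ↔ ∃ u : ℤˣ, u • y = x
        constructor
        · rintro (h | h)
          · exact ⟨1, by rw [one_smul]; exact Subtype.ext h.symm⟩
          · exact ⟨-1, by rw [hsm]; exact Subtype.ext h.symm⟩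
        · rintro ⟨u, rfl⟩
          rcases Int.units_eq_one_or u with rfl | rfl
          · left; rw [one_smul]
          · right; rw [hsm]; rfl
      disjoint := by
        intro x
        obtain ⟨A, A', hA, hA', hwA, hwA', hAA⟩ := t2_separation (sphere_ne_neg n x)
        refine ⟨A ∩ -A', (hA.inter hA'.neg).mem_nhds ⟨hwA, by simpa using hwA'⟩, ?_⟩
        rintro u ⟨_, ⟨y, hy, rfl⟩, hy'⟩
        rcases Int.units_eq_one_or u with rfl | rfl
        · rfl
        · exfalso
          dsimp only at hy'
          rw [hsm] at hy'
          exact Set.disjoint_left.1 hAA hy'.1 hy.2 }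
  exact (this.homeomorph_comp φ).isCoveringMap

end Topo
/-- For each dimension `n` there is a constant `εₙ > 0` such that: if `g` is any Riemannian
metric on `ℝℙⁿ` and `R < (1/2)·Sys(ℝℙⁿ, g)`, then some metric ball of radius `R` in
`(ℝℙⁿ, g)` has volume at least `εₙ Rⁿ`.

The Riemannian manifold `(ℝℙⁿ, g)` is encoded as a length metric space `M` homeomorphic to
real projective `n`-space; volumes are (normalized) Hausdorff measures. -/
theorem projective_space_ball_volume (n : ℕ) (hn : 0 < n) :
    ∃ ε : ℝ, 0 < ε ∧
      ∀ (M : Type) [MetricSpace M] [MeasurableSpace M] [BorelSpace M],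
        Nonempty (M ≃ₜ RealProjectiveSpace n) → IsLengthMetric M →
        ∀ R : ℝ, 0 < R → ENNReal.ofReal (2 * R) < systole M →
          ∃ p : M, ENNReal.ofReal (ε * R ^ n) ≤ rvol n (Metric.ball p R) := by
  obtain ⟨ε₀, hε₀, H⟩ := decomp n
  have hc0 : 0 < Real.pi ^ ((n : ℝ) / 2) / Real.Gamma ((n : ℝ) / 2 + 1) :=
    div_pos (Real.rpow_pos_of_pos Real.pi_pos _) (Real.Gamma_pos_of_pos (by positivity))
  set c : ℝ := Real.pi ^ ((n : ℝ) / 2) / Real.Gamma ((n : ℝ) / 2 + 1) / 2 ^ n with hc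
  have hcpos : 0 < c := by positivity
  have hcc : unitBallVolume n / 2 ^ n = ENNReal.ofReal c := by
    rw [hc, ENNReal.ofReal_div_of_pos (by positivity), unitBallVolume, ENNReal.ofReal_pow (by norm_num)]
    simp
  refine ⟨c * (ε₀ / 2 ^ n), by positivity, ?_⟩
  intro M _ _ _ ⟨h⟩ hlen R hR hsys
  by_contra hcon
  push Not at hcon
  have hcomp : CompactSpace M := h.symm.compactSpace
  have hvol : ∀ x : M, μH[(n : ℝ)] (univ ∩ ball x (R / 2)) ≤ ENNReal.ofReal (ε₀ * (R / 2) ^ n) := by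
    intro x
    rw [univ_inter]
    have h1 := (hcon x).le
    rw [rvol, hcc, mul_assoc, ENNReal.ofReal_mul hcpos.le] at h1
    have h2 := (ENNReal.mul_le_mul_iff_right (ENNReal.ofReal_pos.2 hcpos).ne' ENNReal.ofReal_ne_top).1 h1
    refine (measure_mono (ball_subset_ball (by linarith))).trans (h2.trans (le_of_eq ?_))
    congr 1
    rw [div_pow]; ring
  obtain ⟨col, ctr, δ, hδ, hdec⟩ := H M univ isClosed_univ (R / 2) (by positivity) hvol
  set τ := min (δ / 3) (R / 2) with hτ
  have hτ0 : 0 < τ := by positivity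
  have hτ1 : τ ≤ δ / 3 := min_le_left _ _
  have hτ2 : τ ≤ R / 2 := min_le_right _ _
  let p : sphere (0 : LSchain.Eu n) 1 → M := h.symm ∘ Quotient.mk (antipodalSetoid n)
  have hp : IsCoveringMap p := proj_covering n h.symm
  have hpn : ∀ x y, p x = p y ↔ x = y ∨ x = -y := by
    intro x y
    change h.symm _ = h.symm _ ↔ _
    rw [h.symm.injective.eq_iff, Quotient.eq]
    exact or_congr Subtype.ext_iff.symm ⟨fun h => Subtype.ext h, fun h => congrArg Subtype.val h⟩
  have hne := sphere_ne_neg n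
  have hsurj : Function.Surjective p := h.symm.surjective.comp Quotient.mk_surjective
  choose L hL using hsurj
  let U : ℕ → M → Set M := fun j a => {y | ∃ z, col z = j ∧ ctr z = a ∧ dist y z < τ}
  have hUo : ∀ j a, IsOpen (U j a) := by
    intro j a
    have : U j a = ⋃ z ∈ {z | col z = j ∧ ctr z = a}, ball z τ := by
      ext y; simp [U, and_assoc]
    rw [this]
    exact isOpen_biUnion fun _ _ => isOpen_ball
  have hUd : ∀ j a b y, y ∈ U j a → y ∈ U j b → a = b := by
    rintro j a b y ⟨z, hz, rfl, hyz⟩ ⟨w, hw, rfl, hyw⟩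
    refine (hdec z (mem_univ _)).2.2 w (mem_univ _) (hz.trans hw.symm) ?_
    have := dist_triangle_left z w y
    linarith
  have hpneg : ∀ x, p (-x) = p x := fun x => (hpn _ _).2 (Or.inr rfl)
  let B : ℕ → Set (sphere (0 : LSchain.Eu n) 1) := fun j =>
    ⋃ a, p ⁻¹' U j a ∩ sheet p R (L a)
  refine LS_sets n B ?_ ?_ ?_
  · intro j
    exact isOpen_iUnion fun a => ((hUo j a).preimage hp.continuous).inter
      (sheet_open p hp hpn hne hlen R (L a))
  · intro j w hw hw'
    obtain ⟨a, ha, ha'⟩ := mem_iUnion.1 hw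
    obtain ⟨b, hb, hb'⟩ := mem_iUnion.1 hw'
    rw [mem_preimage, hpneg] at hb
    obtain rfl := hUd j a b _ ha hb
    exact sheet_disj p hp hpn hne R hR hsys _ _ ha' hb'
  · intro w
    obtain ⟨h1, h2, _⟩ := hdec (p w) (mem_univ _)
    have hU : p w ∈ U (col (p w)) (ctr (p w)) := ⟨p w, rfl, rfl, by rwa [dist_self]⟩
    refine ⟨col (p w), h1, ?_⟩
    rcases sheet_cover p hp hpn hlen R (L (ctr (p w))) w (by rw [hL]; linarith) with h3 | h3
    · exact Or.inl (mem_iUnion.2 ⟨_, hU, h3⟩)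
    · exact Or.inr (mem_iUnion.2 ⟨_, by rw [mem_preimage, hpneg]; exact hU, h3⟩)

end
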